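/- arXiv:1503.03388 — 9 statements merged into one kernel-verified Lean document; each statement's English description precedes it below -/
import Mathlib

section
/- Consider an equilibrium of the closed-loop shape dynamics (i.e., real numbers κ_i, θ_i, κ_{ib} and positive reals ρ_i, ρ_{ib}, i = 1,…,n with indices mod n, satisfying E1–E5). Then for every i: cos κ_{ib} = 0 (so κ_{ib} ≡ ±π/2 mod 2π), sin κ_i ≠ 0, and θ_{i+1} ≡ π − κ_i (mod 2π), i.e. cos θ_{i+1} = −cos κ_i and sin θ_{i+1} = sin κ_i. In particular the branch θ_{i+1} ≡ π + κ_i (mod 2π) is impossible. -/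
open Real

/-!
A beacon bearing with `cos κ_b = 0` has `sin κ_b = ±1`, so (E5) forces `sin κ + sin θ ≠ 0`. Writing
`cos κ + cos θ` and `sin κ + sin θ` as products, they share the factor `cos ((κ - θ) / 2)`, which is
therefore nonzero; (E1) then gives `cos ((κ + θ) / 2) = 0`, that is `θ ≡ π - κ` modulo `2 * π`.
-/

theorem sin_ne_zero_of_cos_eq_zero {x : ℝ} (h : cos x = 0) : sin x ≠ 0 := by
  rcases cos_eq_zero_iff_sin_eq.mp h with hsin | hsin <;> norm_num [hsin]

theorem exists_eq_pi_sub_add_int_mul_two_pi {x y : ℝ} (hcos : cos x + cos y = 0)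
    (hsin : sin x + sin y ≠ 0) : ∃ k : ℤ, y = π - x + k * (2 * π) := by
  rw [sin_add_sin] at hsin
  rw [cos_add_cos] at hcos
  have hdiff : cos ((x - y) / 2) ≠ 0 := right_ne_zero_of_mul hsin
  have hhalf : cos ((x + y) / 2) = 0 := by simpa [hdiff] using hcos
  obtain ⟨k, hk⟩ := cos_eq_zero_iff.mp hhalf
  exact ⟨k, by linarith⟩

theorem sin_add_sin_pi_add_add_two_pi_mul_int (x : ℝ) (k : ℤ) :
    sin x + sin (π + x + 2 * π * k) = 0 := by
  rw [mul_comm (2 * π), sin_add_int_mul_two_pi, add_comm π, sin_add_pi, add_neg_cancel]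

-- In (E5) the coefficients `a` and `b` are the reciprocal distances `1 / ρ_i` and `1 / ρ_{ib}`.
theorem stmt0_general {κ θ κb a b : ℝ} (hb : b ≠ 0) (hE1 : cos κ + cos θ = 0)
    (hE4 : cos κb = 0) (hE5 : a * (sin κ + sin θ) = b * sin κb) :
    sin κ ≠ 0 ∧ cos θ = -cos κ ∧ sin θ = sin κ ∧ ∀ k : ℤ, θ ≠ π + κ + 2 * π * k := by
  have hsum : sin κ + sin θ ≠ 0 :=
    right_ne_zero_of_mul (hE5 ▸ mul_ne_zero hb (sin_ne_zero_of_cos_eq_zero hE4))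
  have hsin : sin θ = sin κ := by
    obtain ⟨k, rfl⟩ := exists_eq_pi_sub_add_int_mul_two_pi hE1 hsum
    rw [sin_add_int_mul_two_pi, sin_pi_sub]
  refine ⟨fun hκ ↦ hsum ?_, eq_neg_of_add_eq_zero_right hE1, hsin, ?_⟩
  · rw [hsin, hκ, add_zero]
  · rintro k rfl
    exact hsum (sin_add_sin_pi_add_add_two_pi_mul_int κ k)

/-- Equilibrium hypotheses (E1)-(E5) of the closed-loop shape dynamics of the
`n`-agent beacon-referenced cyclic CB pursuit system, with indices mod `n`. -/
theorem stmt0 (n : ℕ) [NeZero n] (hn : 2 ≤ n)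
    (μ lam α0 : ℝ) (α : ZMod n → ℝ)
    (hμ : 0 < μ) (hlam : lam ∈ Set.Ioo (0:ℝ) 1)
    (κ θ κb ρ ρb : ZMod n → ℝ)
    (hρ : ∀ i, 0 < ρ i) (hρb : ∀ i, 0 < ρb i)
    (hE1 : ∀ i, cos (κ i) + cos (θ (i+1)) = 0)
    (hE2 : ∀ i, μ * ((1 - lam) * sin (κ i - α i) + lam * sin (κb i - α0))
          = (lam / ρ i) * (sin (κ i) + sin (θ (i+1))))
    (hE3 : ∀ i, (1 / ρ i) * (sin (κ i) + sin (θ (i+1)))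
          = (1 / ρ (i-1)) * (sin (κ (i-1)) + sin (θ i)))
    (hE4 : ∀ i, cos (κb i) = 0)
    (hE5 : ∀ i, (1 / ρ i) * (sin (κ i) + sin (θ (i+1)))
          = (1 / ρb i) * sin (κb i)) :
    ∀ i, cos (κb i) = 0 ∧ sin (κ i) ≠ 0 ∧
      cos (θ (i+1)) = - cos (κ i) ∧ sin (θ (i+1)) = sin (κ i) ∧
      ∀ k : ℤ, θ (i+1) ≠ π + κ i + 2 * π * k :=
  fun i ↦ ⟨hE4 i, stmt0_general (one_div_ne_zero (hρb i).ne') (hE1 i) (hE4 i) (hE5 i)⟩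
end

section
/- At any equilibrium of the closed-loop shape dynamics, the quantity sin κ_{ib} / ρ_{ib} is independent of i, and consequently exactly one of the following holds: sin κ_{ib} = 1 for every i ∈ {1,…,n}, or sin κ_{ib} = −1 for every i ∈ {1,…,n}. -/
open Real

/-!
By (E3) the line-of-sight rate `ω i = (sin κ_i + sin θ_{i+1}) / ρ_i` is the same for all agents,
and by (E5) it equals `sin κ_{ib} / ρ_{ib}`. By (E4) each `sin κ_{ib}` is `±1`; as `ρ_{ib} > 0`, it
is the sign of the common rate.
-/

theorem periodic_apply_eq_of_mem_zmultiples {G β : Type*} [AddGroup G] {f : G → β} {c : G}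
    (hf : Function.Periodic f c) (hc : ∀ x, x ∈ AddSubgroup.zmultiples c) (x y : G) :
    f x = f y := by
  obtain ⟨k, hk⟩ := AddSubgroup.mem_zmultiples_iff.mp (hc (-x + y))
  rw [← add_neg_cancel_left x y, ← hk, hf.zsmul k x]

theorem zmod_apply_eq_of_periodic_one {n : ℕ} {β : Type*} {f : ZMod n → β}
    (hf : Function.Periodic f 1) (i j : ZMod n) : f i = f j :=
  periodic_apply_eq_of_mem_zmultiples hf
    (fun x ↦ (ZMod.intCast_surjective x).imp fun k hk ↦ by simpa using hk) i j

theorem eq_of_div_eq_div_of_eq_one_or_neg_one {K : Type*} [Field K] [LinearOrder K]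
    [IsStrictOrderedRing K] {s t a b : K} (hs : s = 1 ∨ s = -1) (ht : t = 1 ∨ t = -1)
    (ha : 0 < a) (hb : 0 < b) (h : s / a = t / b) : s = t := by
  rw [div_eq_div_iff ha.ne' hb.ne'] at h
  rcases hs with rfl | rfl <;> rcases ht with rfl | rfl <;> first | rfl | linarith

theorem xor_forall_eq_of_forall_eq {ι β : Type*} [Nonempty ι] {f : ι → β} {a b : β} (hab : a ≠ b)
    (hf : ∀ i j, f i = f j) (hor : ∀ i, f i = a ∨ f i = b) :
    Xor (∀ i, f i = a) (∀ i, f i = b) := by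
  inhabit ι
  have forall_eq_iff (c : β) : (∀ i, f i = c) ↔ f default = c :=
    ⟨fun h ↦ h default, fun h i ↦ (hf i default).trans h⟩
  rw [forall_eq_iff, forall_eq_iff, xor_iff_or_and_not_and]
  exact ⟨hor default, fun ⟨ha, hb⟩ ↦ hab (ha.symm.trans hb)⟩

theorem stmt2_general {n : ℕ} {ω κb ρb : ZMod n → ℝ} (hρb : ∀ i, 0 < ρb i)
    (hE3 : ∀ i, ω i = ω (i - 1)) (hE4 : ∀ i, cos (κb i) = 0)
    (hE5 : ∀ i, ω i = sin (κb i) / ρb i) :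
    (∀ i j, sin (κb i) / ρb i = sin (κb j) / ρb j) ∧
      Xor (∀ i, sin (κb i) = 1) (∀ i, sin (κb i) = -1) := by
  have hω : Function.Periodic ω 1 := fun i ↦ by rw [hE3 (i + 1), add_sub_cancel_right]
  have rate_eq (i j : ZMod n) : sin (κb i) / ρb i = sin (κb j) / ρb j := by
    rw [← hE5, ← hE5, zmod_apply_eq_of_periodic_one hω i j]
  have sin_eq_or (i : ZMod n) : sin (κb i) = 1 ∨ sin (κb i) = -1 :=
    cos_eq_zero_iff_sin_eq.mp (hE4 i)
  have sin_eq (i j : ZMod n) : sin (κb i) = sin (κb j) :=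
    eq_of_div_eq_div_of_eq_one_or_neg_one (sin_eq_or i) (sin_eq_or j) (hρb i) (hρb j) (rate_eq i j)
  exact ⟨rate_eq, xor_forall_eq_of_forall_eq (by norm_num) sin_eq sin_eq_or⟩

/-- Equilibrium hypotheses (E1)-(E5) of the closed-loop shape dynamics of the
`n`-agent beacon-referenced cyclic CB pursuit system, with indices mod `n`. -/
theorem stmt2 (n : ℕ) [NeZero n] (hn : 2 ≤ n)
    (μ lam α0 : ℝ) (α : ZMod n → ℝ)
    (hμ : 0 < μ) (hlam : lam ∈ Set.Ioo (0:ℝ) 1)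
    (κ θ κb ρ ρb : ZMod n → ℝ)
    (hρ : ∀ i, 0 < ρ i) (hρb : ∀ i, 0 < ρb i)
    (hE1 : ∀ i, cos (κ i) + cos (θ (i+1)) = 0)
    (hE2 : ∀ i, μ * ((1 - lam) * sin (κ i - α i) + lam * sin (κb i - α0))
          = (lam / ρ i) * (sin (κ i) + sin (θ (i+1))))
    (hE3 : ∀ i, (1 / ρ i) * (sin (κ i) + sin (θ (i+1)))
          = (1 / ρ (i-1)) * (sin (κ (i-1)) + sin (θ i)))
    (hE4 : ∀ i, cos (κb i) = 0)
    (hE5 : ∀ i, (1 / ρ i) * (sin (κ i) + sin (θ (i+1)))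
          = (1 / ρb i) * sin (κb i)) :
    (∀ i j, sin (κb i) / ρb i = sin (κb j) / ρb j) ∧
      Xor' (∀ i, sin (κb i) = 1) (∀ i, sin (κb i) = -1) := by
  exact stmt2_general (ω := fun i ↦ (1 / ρ i) * (sin (κ i) + sin (θ (i + 1)))) hρb
    (by simpa only [sub_add_cancel] using hE3) hE4 fun i ↦ (hE5 i).trans (one_div_mul_eq_div _ _)
end

section
/- At any equilibrium of the closed-loop shape dynamics, for every i the distances are determined by the angles via ρ_{ib} = λ / ( μ·(1−λ)·sin κ_{ib}·sin(κ_i − α_i) + μ·λ·cos α_0 ) and ρ_i = 2·ρ_{ib}·sin κ_{ib}·sin κ_i. -/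
open Real

/-!
Let `ω = (sin κᵢ + sin θᵢ₊₁) / ρᵢ`, up to sign the angular rate of the line of sight from agent `i`
to agent `i + 1`. (E4) makes `sin κᵢ_b` a sign, and (E5) reads `ω = sin κᵢ_b / ρᵢ_b`, so `ω ≠ 0` and
`ω sin κᵢ_b = 1 / ρᵢ_b`. Multiplying the control law (E2) by this sign therefore isolates
`1 / ρᵢ_b`. By (E1), `sin θᵢ₊₁ = ± sin κᵢ`; the minus sign would give `ω = 0`, and the plus sign
gives `ρᵢ ω = 2 sin κᵢ`.
-/

lemma sin_sq_eq_one_of_cos_eq_zero {x : ℝ} (hx : cos x = 0) : sin x ^ 2 = 1 := by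
  simp [sin_sq, hx]

lemma sin_mul_sin_sub_of_cos_eq_zero {x : ℝ} (hx : cos x = 0) (y : ℝ) :
    sin x * sin (x - y) = cos y := by
  rw [sin_sub, hx]
  linear_combination cos y * sin_sq_eq_one_of_cos_eq_zero hx

lemma sin_eq_sin_of_cos_add_cos_eq_zero {x y : ℝ} (hcos : cos x + cos y = 0)
    (hsin : sin x + sin y ≠ 0) : sin y = sin x := by
  have hsq : sin y ^ 2 = sin x ^ 2 := by
    rw [sin_sq, sin_sq, eq_neg_of_add_eq_zero_right hcos, neg_sq]
  exact (sq_eq_sq_iff_eq_or_eq_neg.mp hsq).resolve_right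
    fun hneg => hsin (by rw [hneg, add_neg_cancel])

lemma eq_two_mul_sin_div_of_angular_rate_eq {κ θ ρ ω : ℝ} (hρ : ρ ≠ 0) (hω : ω ≠ 0)
    (hcos : cos κ + cos θ = 0) (hrate : 1 / ρ * (sin κ + sin θ) = ω) :
    ρ = 2 * sin κ / ω := by
  have hsum : sin κ + sin θ = ρ * ω := by
    rw [← hrate, ← mul_assoc, mul_one_div_cancel hρ, one_mul]
  have hsin : sin θ = sin κ :=
    sin_eq_sin_of_cos_add_cos_eq_zero hcos (hsum ▸ mul_ne_zero hρ hω)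
  rw [eq_div_iff hω, ← hsum, hsin, two_mul]

lemma denom_eq_mul_sin_of_control_eq {μ lam α0 κb u v : ℝ} (hcos : cos κb = 0)
    (hcontrol : μ * ((1 - lam) * u + lam * sin (κb - α0)) = v) :
    μ * (1 - lam) * sin κb * u + μ * lam * cos α0 = v * sin κb := by
  rw [← hcontrol, ← sin_mul_sin_sub_of_cos_eq_zero hcos α0]
  ring

theorem stmt3_general {μ lam α0 α κ θ κb ρ ρb : ℝ} (hlam : lam ≠ 0) (hρ : ρ ≠ 0) (hρb : ρb ≠ 0)
    (hE1 : cos κ + cos θ = 0)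
    (hE2 : μ * ((1 - lam) * sin (κ - α) + lam * sin (κb - α0)) = lam / ρ * (sin κ + sin θ))
    (hE4 : cos κb = 0)
    (hE5 : 1 / ρ * (sin κ + sin θ) = 1 / ρb * sin κb) :
    ρb = lam / (μ * (1 - lam) * sin κb * sin (κ - α) + μ * lam * cos α0) ∧
      ρ = 2 * ρb * sin κb * sin κ := by
  have hsq : sin κb ^ 2 = 1 := sin_sq_eq_one_of_cos_eq_zero hE4
  have hsin : sin κb ≠ 0 := fun h => by simp [h] at hsq
  have hcontrol : μ * ((1 - lam) * sin (κ - α) + lam * sin (κb - α0)) =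
      lam * (1 / ρb * sin κb) := by
    rw [hE2, ← hE5]
    ring
  have hdenom : μ * (1 - lam) * sin κb * sin (κ - α) + μ * lam * cos α0 = lam / ρb :=
    calc
      _ = lam * (1 / ρb * sin κb) * sin κb := denom_eq_mul_sin_of_control_eq hE4 hcontrol
      _ = lam / ρb * sin κb ^ 2 := by ring
      _ = lam / ρb := by rw [hsq, mul_one]
  constructor
  · rw [hdenom, div_div_cancel₀ hlam]
  · calc ρ = 2 * sin κ / (1 / ρb * sin κb) :=
          eq_two_mul_sin_div_of_angular_rate_eq hρ
            (mul_ne_zero (one_div_ne_zero hρb) hsin) hE1 hE5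
      _ = 2 * ρb * sin κb * sin κ := by
          field_simp
          rw [hsq, mul_one]

/-- Equilibrium hypotheses (E1)-(E5) of the closed-loop shape dynamics of the
`n`-agent beacon-referenced cyclic CB pursuit system, with indices mod `n`. -/
theorem stmt3 (n : ℕ) [NeZero n] (hn : 2 ≤ n)
    (μ lam α0 : ℝ) (α : ZMod n → ℝ)
    (hμ : 0 < μ) (hlam : lam ∈ Set.Ioo (0:ℝ) 1)
    (κ θ κb ρ ρb : ZMod n → ℝ)
    (hρ : ∀ i, 0 < ρ i) (hρb : ∀ i, 0 < ρb i)
    (hE1 : ∀ i, cos (κ i) + cos (θ (i+1)) = 0)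
    (hE2 : ∀ i, μ * ((1 - lam) * sin (κ i - α i) + lam * sin (κb i - α0))
          = (lam / ρ i) * (sin (κ i) + sin (θ (i+1))))
    (hE3 : ∀ i, (1 / ρ i) * (sin (κ i) + sin (θ (i+1)))
          = (1 / ρ (i-1)) * (sin (κ (i-1)) + sin (θ i)))
    (hE4 : ∀ i, cos (κb i) = 0)
    (hE5 : ∀ i, (1 / ρ i) * (sin (κ i) + sin (θ (i+1)))
          = (1 / ρb i) * sin (κb i)) :
    ∀ i, ρb i = lam / (μ * (1 - lam) * sin (κb i) * sin (κ i - α i) + μ * lam * cos α0) ∧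
      ρ i = 2 * ρb i * sin (κb i) * sin (κ i) := by
  exact fun i => stmt3_general hlam.1.ne' (hρ i).ne' (hρb i).ne' (hE1 i) (hE2 i) (hE4 i) (hE5 i)
end

section
/- (Proposition 1(a).) At any equilibrium of the closed-loop shape dynamics, the distances from the agents to the beacon are all equal: ρ_{1b} = ρ_{2b} = ⋯ = ρ_{nb}. Hence every relative equilibrium of the beacon-referenced cyclic CB pursuit system is a circling equilibrium in which all agents lie on a common circle centered at the beacon. -/
open Real

/-!
By (E3) all the baselines joining an agent to the next one turn at the same angular rate, and by
(E5) that rate is `sin κ_{ib} / ρ_{ib}` for every agent `i`. The angles `κ_{ib}` all have the same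
cosine, of absolute value less than one, so their sines are nonzero and agree up to sign. Taking
absolute values leaves the same nonzero numerator over each of the positive distances `ρ_{ib}`.
-/

theorem zmod_eq_of_periodic_one {β : Type*} {n : ℕ} {f : ZMod n → β} (hf : Function.Periodic f 1)
    (i j : ZMod n) : f i = f j := by
  have eq_zero (k : ZMod n) : f k = f 0 := by
    obtain ⟨m, rfl⟩ := ZMod.intCast_surjective k
    simpa only [mul_one] using hf.int_mul_eq m
  rw [eq_zero i, eq_zero j]

theorem eq_of_div_eq_div_of_abs_eq {K : Type*} [Field K] [LinearOrder K] [IsStrictOrderedRing K]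
    {x y r s : K} (hr : 0 < r) (hs : 0 < s) (hx : x ≠ 0) (hxy : |x| = |y|)
    (h : x / r = y / s) : r = s := by
  have habs : |x| * r⁻¹ = |x| * s⁻¹ := by
    rw [← div_eq_mul_inv, ← div_eq_mul_inv]
    calc |x| / r = |x / r| := by rw [abs_div, abs_of_pos hr]
      _ = |y / s| := by rw [h]
      _ = |x| / s := by rw [abs_div, abs_of_pos hs, hxy]
  exact inv_injective (mul_left_cancel₀ (abs_ne_zero.mpr hx) habs)

theorem abs_sin_eq_abs_sin_of_cos_eq {a b : ℝ} (h : cos a = cos b) : |sin a| = |sin b| := by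
  rw [abs_sin_eq_sqrt_one_sub_cos_sq, abs_sin_eq_sqrt_one_sub_cos_sq, h]

theorem sin_ne_zero_of_abs_cos_lt_one {a : ℝ} (h : |cos a| < 1) : sin a ≠ 0 := by
  intro hsin
  exact h.ne (abs_cos_eq_one_iff.mpr (sin_eq_zero_iff.mp hsin))

/- `ω i` is the angular rate of the baseline from agent `i` to agent `i + 1`. Since `ZMod 0 = ℤ`,
the case `n = 0` is a chain of agents that is infinite in both directions. -/
theorem stmt4_general {n : ℕ} {c : ℝ} {ω κb ρb : ZMod n → ℝ} (hρb : ∀ i, 0 < ρb i)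
    (hω : ∀ i, ω i = ω (i - 1)) (hc : |c| < 1) (hcos : ∀ i, cos (κb i) = c)
    (hbeacon : ∀ i, ω i = sin (κb i) / ρb i) (i j : ZMod n) : ρb i = ρb j := by
  have hperiodic : Function.Periodic ω 1 := fun k => by
    rw [hω (k + 1), add_sub_cancel_right]
  have hrate : sin (κb i) / ρb i = sin (κb j) / ρb j := by
    rw [← hbeacon i, ← hbeacon j, zmod_eq_of_periodic_one hperiodic i j]
  have hsin : sin (κb i) ≠ 0 := sin_ne_zero_of_abs_cos_lt_one (by rwa [hcos i])
  have habs : |sin (κb i)| = |sin (κb j)| :=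
    abs_sin_eq_abs_sin_of_cos_eq ((hcos i).trans (hcos j).symm)
  exact eq_of_div_eq_div_of_abs_eq (hρb i) (hρb j) hsin habs hrate

/-- Equilibrium hypotheses (E1)-(E5) of the closed-loop shape dynamics of the
`n`-agent beacon-referenced cyclic CB pursuit system, with indices mod `n`. -/
theorem stmt4 (n : ℕ) [NeZero n] (hn : 2 ≤ n)
    (μ lam α0 : ℝ) (α : ZMod n → ℝ)
    (hμ : 0 < μ) (hlam : lam ∈ Set.Ioo (0:ℝ) 1)
    (κ θ κb ρ ρb : ZMod n → ℝ)
    (hρ : ∀ i, 0 < ρ i) (hρb : ∀ i, 0 < ρb i)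
    (hE1 : ∀ i, cos (κ i) + cos (θ (i+1)) = 0)
    (hE2 : ∀ i, μ * ((1 - lam) * sin (κ i - α i) + lam * sin (κb i - α0))
          = (lam / ρ i) * (sin (κ i) + sin (θ (i+1))))
    (hE3 : ∀ i, (1 / ρ i) * (sin (κ i) + sin (θ (i+1)))
          = (1 / ρ (i-1)) * (sin (κ (i-1)) + sin (θ i)))
    (hE4 : ∀ i, cos (κb i) = 0)
    (hE5 : ∀ i, (1 / ρ i) * (sin (κ i) + sin (θ (i+1)))
          = (1 / ρb i) * sin (κb i)) :
    ∀ i j, ρb i = ρb j :=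
  stmt4_general (ω := fun i => (1 / ρ i) * (sin (κ i) + sin (θ (i + 1)))) hρb
    (fun i => by simpa only [sub_add_cancel] using hE3 i) (abs_zero.trans_lt one_pos) hE4
    (fun i => by rw [hE5 i, one_div_mul_eq_div])
end

section
/- At any equilibrium of the closed-loop shape dynamics, for every i one has sin(κ_{i+1} − α_{i+1}) = sin(κ_i − α_i) (indices mod n). -/
open Real

/-!
At equilibrium every agent moves perpendicularly to its direction to the beacon, so the sine of its
beacon bearing `κb i` is `±1`; since it is a positive multiple of the common angular rate `ω`, it
equals `sign ω`. The beacon term `sin (κb i - α0)` of the control law is then `sign ω * cos α0`, and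
the control law becomes a linear equation for `sin (κ i - α i)` with the same coefficients for every
agent.
-/

theorem sin_eq_sign_mul_sin_of_cos_eq_zero {x c : ℝ} (hx : cos x = 0) (hc : 0 < c) :
    sin x = sign (c * sin x) := by
  rcases cos_eq_zero_iff_sin_eq.mp hx with h | h
  · rw [h, mul_one, sign_of_pos hc]
  · rw [h, mul_neg_one, sign_neg, sign_of_pos hc]

theorem sin_sub_eq_sin_mul_cos_of_cos_eq_zero {x : ℝ} (hx : cos x = 0) (a : ℝ) :
    sin (x - a) = sin x * cos a := by
  rw [sin_sub, hx, zero_mul, sub_zero]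

/-- The value that `sin (κ i - α i)` takes at an equilibrium with angular rate `ω`, for the gain
`μ`, the mixing parameter `lam` and the beacon offset `α0`. -/
noncomputable def equilibriumSin (μ lam α0 ω : ℝ) : ℝ :=
  lam * (ω - μ * (sign ω * cos α0)) / (μ * (1 - lam))

theorem eq_equilibriumSin {μ lam α0 s κb ρb ω : ℝ} (hμ : μ ≠ 0) (hlam : lam ≠ 1) (hρb : 0 < ρb)
    (hcontrol : μ * ((1 - lam) * s + lam * sin (κb - α0)) = lam * ω)
    (hcos : cos κb = 0) (hrate : ω = 1 / ρb * sin κb) :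
    s = equilibriumSin μ lam α0 ω := by
  have hsin : sin κb = sign ω := by
    rw [hrate, ← sin_eq_sign_mul_sin_of_cos_eq_zero hcos (one_div_pos.mpr hρb)]
  have hbeacon : sin (κb - α0) = sign ω * cos α0 := by
    rw [sin_sub_eq_sin_mul_cos_of_cos_eq_zero hcos, hsin]
  have hcoeff : μ * (1 - lam) ≠ 0 := mul_ne_zero hμ (sub_ne_zero.mpr hlam.symm)
  rw [hbeacon] at hcontrol
  rw [equilibriumSin, eq_div_iff hcoeff]
  linear_combination hcontrol

/- The angular rate `ω i` stands for `(1 / ρ i) * (sin (κ i) + sin (θ (i + 1)))`, the only way in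
which the pursuit graph enters the control law. -/
theorem stmt6_general {ι : Type*} {μ lam α0 : ℝ} {α κ κb ρb ω : ι → ℝ}
    (hμ : μ ≠ 0) (hlam : lam ≠ 1) (hρb : ∀ i, 0 < ρb i)
    (hcontrol : ∀ i, μ * ((1 - lam) * sin (κ i - α i) + lam * sin (κb i - α0)) = lam * ω i)
    (hcos : ∀ i, cos (κb i) = 0) (hrate : ∀ i, ω i = 1 / ρb i * sin (κb i))
    {i j : ι} (hω : ω i = ω j) :
    sin (κ i - α i) = sin (κ j - α j) := by
  have hvalue (k : ι) : sin (κ k - α k) = equilibriumSin μ lam α0 (ω k) :=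
    eq_equilibriumSin hμ hlam (hρb k) (hcontrol k) (hcos k) (hrate k)
  rw [hvalue i, hvalue j, hω]

/-- Equilibrium hypotheses (E1)-(E5) of the closed-loop shape dynamics of the
`n`-agent beacon-referenced cyclic CB pursuit system, with indices mod `n`. -/
theorem stmt6 (n : ℕ) [NeZero n] (hn : 2 ≤ n)
    (μ lam α0 : ℝ) (α : ZMod n → ℝ)
    (hμ : 0 < μ) (hlam : lam ∈ Set.Ioo (0:ℝ) 1)
    (κ θ κb ρ ρb : ZMod n → ℝ)
    (hρ : ∀ i, 0 < ρ i) (hρb : ∀ i, 0 < ρb i)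
    (hE1 : ∀ i, cos (κ i) + cos (θ (i+1)) = 0)
    (hE2 : ∀ i, μ * ((1 - lam) * sin (κ i - α i) + lam * sin (κb i - α0))
          = (lam / ρ i) * (sin (κ i) + sin (θ (i+1))))
    (hE3 : ∀ i, (1 / ρ i) * (sin (κ i) + sin (θ (i+1)))
          = (1 / ρ (i-1)) * (sin (κ (i-1)) + sin (θ i)))
    (hE4 : ∀ i, cos (κb i) = 0)
    (hE5 : ∀ i, (1 / ρ i) * (sin (κ i) + sin (θ (i+1)))
          = (1 / ρb i) * sin (κb i)) :
    ∀ i, sin (κ (i+1) - α (i+1)) = sin (κ i - α i) := by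
  exact fun i => stmt6_general hμ.ne' hlam.2.ne hρb (fun k => (hE2 k).trans (by ring)) hE4 hE5
    (by simpa only [add_sub_cancel_right] using hE3 (i + 1))
end

section
/- Let ρ_1, ρ_2, ρ_{1b}, ρ_{2b} > 0 and κ_1, κ_2, θ_1, θ_2, κ_{1b}, κ_{2b} ∈ ℝ satisfy the two-agent shape constraints: (π + κ_1 − θ_2) + (π + κ_2 − θ_1) ∈ 2πℤ, ρ_1 = ρ_{1b}·exp(√−1·(κ_{1b} − κ_1)) + ρ_{2b}·exp(√−1·(κ_{2b} − θ_2)), and ρ_2 = ρ_{2b}·exp(√−1·(κ_{2b} − κ_2)) + ρ_{1b}·exp(√−1·(κ_{1b} − θ_1)) (equalities in ℂ). Then ρ_1 = ρ_2, θ_1 ≡ κ_1 (mod 2π), and θ_2 ≡ κ_2 (mod 2π). -/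
open Real

/-!
Multiplying the first consistency equation by `exp (√-1 κ₁)` and the second by `exp (√-1 θ₁)` aligns
their `ρ₁b` terms, and cycle closure says precisely that it also aligns their `ρ₂b` terms. Hence
`ρ₁ exp (√-1 κ₁) = ρ₂ exp (√-1 θ₁)`, and uniqueness of polar coordinates gives `ρ₁ = ρ₂` and
`κ₁ ≡ θ₁`; closure then yields `κ₂ ≡ θ₂`.
-/

section Angle

open Real.Angle

theorem angle_coe_eq_iff_exists_eq_add_two_pi_mul {θ ψ : ℝ} :
    (θ : Angle) = ψ ↔ ∃ k : ℤ, θ = ψ + 2 * π * k := by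
  simp only [angle_eq_iff_two_pi_dvd_sub, sub_eq_iff_eq_add']

theorem cycle_closure_iff_angle_add_eq_add {κ₁ κ₂ θ₁ θ₂ : ℝ} :
    (∃ K : ℤ, (π + κ₁ - θ₂) + (π + κ₂ - θ₁) = 2 * π * K) ↔ (κ₁ + κ₂ : Angle) = θ₁ + θ₂ := by
  have full_turn : (κ₁ + κ₂ : Angle) = ((π + κ₁ + (π + κ₂) : ℝ) : Angle) := by
    rw [add_add_add_comm, ← two_mul, coe_add, coe_two_pi, zero_add, coe_add]
  rw [full_turn, ← coe_add, angle_eq_iff_two_pi_dvd_sub, add_comm θ₁, add_sub_add_comm]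

theorem cexp_I_mul_ofReal_sub_ofReal (x y : ℝ) :
    Complex.exp (Complex.I * ((x : ℂ) - y)) = ((x : Angle) - y).toCircle := by
  rw [← coe_sub, toCircle_coe, Circle.coe_exp, Complex.ofReal_sub, mul_comm]

theorem coe_angle_arg_ofReal_mul_toCircle {r : ℝ} (hr : 0 < r) (θ : Angle) :
    (Complex.arg (r * θ.toCircle) : Angle) = θ := by
  rw [Complex.arg_real_mul _ hr, arg_toCircle]

theorem ofReal_mul_toCircle_eq_iff {r s : ℝ} (hr : 0 < r) (hs : 0 < s) {θ ψ : Angle} :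
    (r : ℂ) * θ.toCircle = s * ψ.toCircle ↔ r = s ∧ θ = ψ := by
  refine ⟨fun h => ?_, fun ⟨hrs, hθψ⟩ => by rw [hrs, hθψ]⟩
  have angle_eq : θ = ψ := by
    rw [← coe_angle_arg_ofReal_mul_toCircle hr θ, h, coe_angle_arg_ofReal_mul_toCircle hs]
  rw [angle_eq] at h
  exact ⟨Complex.ofReal_injective (mul_right_cancel₀ ψ.toCircle.coe_ne_zero h), angle_eq⟩

theorem coe_toCircle_add (θ ψ : Angle) :
    ((θ + ψ).toCircle : ℂ) = θ.toCircle * ψ.toCircle := by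
  rw [toCircle_add, Circle.coe_mul]

theorem add_toCircle_mul_toCircle_eq_of_add_eq_add (z w : ℂ) (α β : Angle)
    {κ₁ κ₂ θ₁ θ₂ : Angle} (closure : κ₁ + κ₂ = θ₁ + θ₂) :
    (z * (α - κ₁).toCircle + w * (β - θ₂).toCircle) * κ₁.toCircle =
      (w * (β - κ₂).toCircle + z * (α - θ₁).toCircle) * θ₁.toCircle := by
  have aligned : β - θ₂ + κ₁ = β - κ₂ + θ₁ := by
    rw [← sub_eq_zero] at closure ⊢
    rw [← closure]
    abel
  simp only [add_mul, mul_assoc, ← coe_toCircle_add, sub_add_cancel, aligned]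
  rw [add_comm]

end Angle

theorem stmt13 (ρ1 ρ2 ρ1b ρ2b : ℝ) (h1 : 0 < ρ1) (h2 : 0 < ρ2)
    (h1b : 0 < ρ1b) (h2b : 0 < ρ2b)
    (κ1 κ2 θ1 θ2 κ1b κ2b : ℝ)
    (hclosure : ∃ K : ℤ, (π + κ1 - θ2) + (π + κ2 - θ1) = 2 * π * K)
    (hc1 : (ρ1 : ℂ) = (ρ1b : ℂ) * Complex.exp (Complex.I * ((κ1b : ℂ) - (κ1 : ℂ)))
          + (ρ2b : ℂ) * Complex.exp (Complex.I * ((κ2b : ℂ) - (θ2 : ℂ))))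
    (hc2 : (ρ2 : ℂ) = (ρ2b : ℂ) * Complex.exp (Complex.I * ((κ2b : ℂ) - (κ2 : ℂ)))
          + (ρ1b : ℂ) * Complex.exp (Complex.I * ((κ1b : ℂ) - (θ1 : ℂ)))) :
    ρ1 = ρ2 ∧ (∃ k : ℤ, θ1 = κ1 + 2 * π * k) ∧ (∃ k : ℤ, θ2 = κ2 + 2 * π * k) := by
  have angle_sum : (κ1 + κ2 : Angle) = θ1 + θ2 := cycle_closure_iff_angle_add_eq_add.mp hclosure
  simp only [cexp_I_mul_ofReal_sub_ofReal] at hc1 hc2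
  have polar_eq : (ρ1 : ℂ) * (κ1 : Angle).toCircle = ρ2 * (θ1 : Angle).toCircle := by
    rw [hc1, hc2]
    exact add_toCircle_mul_toCircle_eq_of_add_eq_add _ _ _ _ angle_sum
  obtain ⟨distance_eq, angle_eq₁⟩ := (ofReal_mul_toCircle_eq_iff h1 h2).mp polar_eq
  have angle_eq₂ : (κ2 : Angle) = θ2 := by rwa [angle_eq₁, add_right_inj] at angle_sum
  exact ⟨distance_eq, angle_coe_eq_iff_exists_eq_add_two_pi_mul.mp angle_eq₁.symm,
    angle_coe_eq_iff_exists_eq_add_two_pi_mul.mp angle_eq₂.symm⟩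
end

section
/- (Type 1 CCW equilibrium, Table 1.) Fix μ > 0, λ ∈ (0,1), α_0, α_1, α_2 ∈ ℝ, write α⁺ = (α_1+α_2)/2 and α⁻ = (α_1−α_2)/2, and assume cos α⁻ > 0 and λ·cos α_0 + (1−λ)·cos α⁺ > 0. Then the point with κ_{1b} = κ_{2b} = π/2, κ_1 = π/2 + α⁻, κ_2 = π/2 − α⁻, ρ_{1b} = ρ_{2b} = λ/(μ·λ·cos α_0 + μ·(1−λ)·cos α⁺), and ρ = 2·ρ_{1b}·cos α⁻ has all coordinates ρ, ρ_{1b}, ρ_{2b} > 0 and is an equilibrium of the two-agent closed-loop vector field f (i.e., f vanishes there); moreover it satisfies the constraint equations g_1 = g_2 = 0. -/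
/-!
Both agents move tangentially around the beacon, so their distances to it are constant, and the
triangle that they form with it is isosceles, which gives `ρ̇ = 0` and the two constraints. Since
`ρ = 2 r cos δ` and `sin κ₁ + sin κ₂ = 2 cos δ`, the baseline turns at rate `1 / r`, the same as
the beacon lines of sight, so `κ̇ᵢb = κ̇ᵢ`. What remains is the steering balance of the two agents.
For `δ = α⁻` both balances become `lam / r = μ lam cos α₀ + μ (1 - lam) cos α⁺`, which determines
the radius.
-/

open Real

/-- The two-agent closed-loop vector field on states
`ξ = (κ₁, κ₂, ρ, κ₁b, κ₂b, ρ₁b, ρ₂b)`. -/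
noncomputable def twoAgentF (μ lam α0 α1 α2 : ℝ) (ξ : Fin 7 → ℝ) : Fin 7 → ℝ :=
  ![-μ * ((1 - lam) * sin (ξ 0 - α1) + lam * sin (ξ 3 - α0))
      + (lam / ξ 2) * (sin (ξ 0) + sin (ξ 1)),
    -μ * ((1 - lam) * sin (ξ 1 - α2) + lam * sin (ξ 4 - α0))
      + (lam / ξ 2) * (sin (ξ 0) + sin (ξ 1)),
    -(cos (ξ 0) + cos (ξ 1)),
    (-μ * ((1 - lam) * sin (ξ 0 - α1) + lam * sin (ξ 3 - α0))
      + (lam / ξ 2) * (sin (ξ 0) + sin (ξ 1)))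
      - (1 / ξ 2) * (sin (ξ 0) + sin (ξ 1)) + (1 / ξ 5) * sin (ξ 3),
    (-μ * ((1 - lam) * sin (ξ 1 - α2) + lam * sin (ξ 4 - α0))
      + (lam / ξ 2) * (sin (ξ 0) + sin (ξ 1)))
      - (1 / ξ 2) * (sin (ξ 0) + sin (ξ 1)) + (1 / ξ 6) * sin (ξ 4),
    -cos (ξ 3),
    -cos (ξ 4)]

/-- First constraint function for the two-agent system. -/
noncomputable def gOne (ξ : Fin 7 → ℝ) : ℝ :=
  ξ 2 - ξ 5 * cos (ξ 3 - ξ 0) - ξ 6 * cos (ξ 4 - ξ 1)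

/-- Second constraint function for the two-agent system. -/
noncomputable def gTwo (ξ : Fin 7 → ℝ) : ℝ :=
  ξ 5 * sin (ξ 3 - ξ 0) + ξ 6 * sin (ξ 4 - ξ 1)

/-- The state in which both agents circle the beacon counterclockwise (`κ₁b = κ₂b = π/2`) at the
common radius `r`, at the base vertices of an isosceles triangle with apex at the beacon and signed
base angle `δ`; the distance between the agents is the base length `2 r cos δ`. -/
noncomputable def circlingState (δ r : ℝ) : Fin 7 → ℝ :=
  ![π / 2 + δ, π / 2 - δ, 2 * r * cos δ, π / 2, π / 2, r, r]

theorem gOne_circlingState (δ r : ℝ) : gOne (circlingState δ r) = 0 := by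
  change 2 * r * cos δ - r * cos (π / 2 - (π / 2 + δ)) - r * cos (π / 2 - (π / 2 - δ)) = 0
  rw [sub_add_cancel_left, sub_sub_cancel, cos_neg]
  ring

theorem gTwo_circlingState (δ r : ℝ) : gTwo (circlingState δ r) = 0 := by
  change r * sin (π / 2 - (π / 2 + δ)) + r * sin (π / 2 - (π / 2 - δ)) = 0
  rw [sub_add_cancel_left, sub_sub_cancel, sin_neg]
  ring

theorem sin_pi_div_two_add (x : ℝ) : sin (π / 2 + x) = cos x := by
  rw [add_comm, sin_add_pi_div_two]

theorem div_mul_sin_add_sin_eq_div {δ : ℝ} (hδ : cos δ ≠ 0) (a r : ℝ) :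
    a / (2 * r * cos δ) * (sin (π / 2 + δ) + sin (π / 2 - δ)) = a / r := by
  rw [sin_pi_div_two_add, sin_pi_div_two_sub]
  field_simp
  ring

theorem twoAgentF_circlingState (μ lam α0 α1 α2 : ℝ) {δ : ℝ} (hδ : cos δ ≠ 0) (r : ℝ) :
    twoAgentF μ lam α0 α1 α2 (circlingState δ r) =
      ![lam / r - μ * ((1 - lam) * cos (δ - α1) + lam * cos α0),
        lam / r - μ * ((1 - lam) * cos (δ + α2) + lam * cos α0),
        0,
        lam / r - μ * ((1 - lam) * cos (δ - α1) + lam * cos α0),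
        lam / r - μ * ((1 - lam) * cos (δ + α2) + lam * cos α0),
        0,
        0] := by
  have bearing₁ : sin (π / 2 + δ - α1) = cos (δ - α1) := by
    rw [add_sub_assoc, sin_pi_div_two_add]
  have bearing₂ : sin (π / 2 - δ - α2) = cos (δ + α2) := by
    rw [sub_sub, sin_pi_div_two_sub]
  have range_rate : cos (π / 2 + δ) + cos (π / 2 - δ) = 0 := by
    rw [add_comm (π / 2) δ, cos_add_pi_div_two, cos_pi_div_two_sub, neg_add_cancel]
  simp only [twoAgentF, circlingState, Matrix.cons_val, div_mul_sin_add_sin_eq_div hδ, bearing₁,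
    bearing₂, range_rate, sin_pi_div_two_sub α0, sin_pi_div_two, cos_pi_div_two]
  ring_nf

theorem twoAgentF_circlingState_eq_zero_iff (μ lam α0 α1 α2 : ℝ) {δ : ℝ} (hδ : cos δ ≠ 0) (r : ℝ) :
    twoAgentF μ lam α0 α1 α2 (circlingState δ r) = 0 ↔
      lam / r = μ * ((1 - lam) * cos (δ - α1) + lam * cos α0) ∧
        lam / r = μ * ((1 - lam) * cos (δ + α2) + lam * cos α0) := by
  rw [twoAgentF_circlingState μ lam α0 α1 α2 hδ r]
  simp only [Matrix.cons_eq_zero_iff, Matrix.zero_empty, sub_eq_zero]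
  tauto

theorem twoAgentF_circlingState_half_sub_eq_zero_iff (μ lam α0 α1 α2 r : ℝ)
    (hcos : cos ((α1 - α2) / 2) ≠ 0) :
    twoAgentF μ lam α0 α1 α2 (circlingState ((α1 - α2) / 2) r) = 0 ↔
      lam / r = μ * lam * cos α0 + μ * (1 - lam) * cos ((α1 + α2) / 2) := by
  have offset₁ : (α1 - α2) / 2 - α1 = -((α1 + α2) / 2) := by ring
  have offset₂ : (α1 - α2) / 2 + α2 = (α1 + α2) / 2 := by ring
  rw [twoAgentF_circlingState_eq_zero_iff μ lam α0 α1 α2 hcos, offset₁, offset₂, cos_neg, and_self]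
  ring_nf

theorem stmt14_general (μ lam α0 α1 α2 : ℝ) (αp αm : ℝ)
    (hαp : αp = (α1 + α2) / 2) (hαm : αm = (α1 - α2) / 2) (hcos : 0 < cos αm)
    (hradius : 0 < lam / (μ * lam * cos α0 + μ * (1 - lam) * cos αp)) :
    let ρ1b : ℝ := lam / (μ * lam * cos α0 + μ * (1 - lam) * cos αp)
    let ξ : Fin 7 → ℝ := circlingState αm ρ1b
    0 < ξ 2 ∧ 0 < ξ 5 ∧ 0 < ξ 6 ∧
      twoAgentF μ lam α0 α1 α2 ξ = 0 ∧ gOne ξ = 0 ∧ gTwo ξ = 0 := by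
  intro ρ1b ξ
  have hlam : lam ≠ 0 := (div_ne_zero_iff.mp hradius.ne').1
  have separation_pos : 0 < 2 * ρ1b * cos αm := mul_pos (mul_pos two_pos hradius) hcos
  have equilibrium : twoAgentF μ lam α0 α1 α2 ξ = 0 := by
    subst hαp hαm
    exact (twoAgentF_circlingState_half_sub_eq_zero_iff μ lam α0 α1 α2 ρ1b hcos.ne').mpr
      (div_div_cancel₀ hlam)
  exact ⟨separation_pos, hradius, hradius, equilibrium,
    gOne_circlingState αm ρ1b, gTwo_circlingState αm ρ1b⟩

/-- The Type 1 CCW circling equilibrium of the two-agent system (Table 1):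
`f` vanishes there and the constraints `g₁ = g₂ = 0` hold. -/
theorem stmt14 (μ lam α0 α1 α2 : ℝ) (hμ : 0 < μ) (hlam : lam ∈ Set.Ioo (0:ℝ) 1)
    (αp αm : ℝ) (hαp : αp = (α1 + α2) / 2) (hαm : αm = (α1 - α2) / 2)
    (hcos : cos αm > 0)
    (hpos : lam * cos α0 + (1 - lam) * cos αp > 0) :
    (let ρ1b : ℝ := lam / (μ * lam * cos α0 + μ * (1 - lam) * cos αp)
     let ξ : Fin 7 → ℝ := ![π/2 + αm, π/2 - αm, 2 * ρ1b * cos αm, π/2, π/2, ρ1b, ρ1b]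
     0 < ξ 2 ∧ 0 < ξ 5 ∧ 0 < ξ 6 ∧
       twoAgentF μ lam α0 α1 α2 ξ = 0 ∧ gOne ξ = 0 ∧ gTwo ξ = 0) := by
  exact stmt14_general μ lam α0 α1 α2 αp αm hαp hαm hcos <|
    div_pos hlam.1 (by linarith only [mul_pos hμ hpos])
end

section
/- At every state ξ = (κ_1, κ_2, ρ, κ_{1b}, κ_{2b}, ρ_{1b}, ρ_{2b}) with ρ, ρ_{1b}, ρ_{2b} > 0, the derivatives of the constraint functions along the two-agent closed-loop vector field f satisfy Dg_1(ξ)[f(ξ)] = −((sin κ_1 + sin κ_2)/ρ)·g_2(ξ) and Dg_2(ξ)[f(ξ)] = ((sin κ_1 + sin κ_2)/ρ)·g_1(ξ), where Dg_j(ξ) denotes the (Fréchet) derivative of g_j at ξ. In particular, the constraint manifold M = {ξ : g_1(ξ) = g_2(ξ) = 0} is invariant under the dynamics. -/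
open Real

/-!
Put `G = gOne - i gTwo = ρ - z₁ - z₂` with `zⱼ = ρⱼb exp (i (κⱼb - κⱼ))`, and let
`ω = (sin κ₁ + sin κ₂) / ρ`. The kinematics give `zⱼ' = -i ω zⱼ - exp (-i κⱼ)`, while
`ρ' = -i ω ρ - exp (-i κ₁) - exp (-i κ₂)`. The exponentials cancel in `G' = -i ω G`: the closure
error of the triangle formed by the agents and the beacon only rotates. The steering controls
drop out because they change `κⱼ` and `κⱼb` at the same rate.
-/

/-- The rate `ω = (sin κ₁ + sin κ₂) / ρ` at which the line of sight between the two agents rotates;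
the constraint vector `(gOne, gTwo)` turns at this rate. -/
noncomputable def lineOfSightRate (ξ : Fin 7 → ℝ) : ℝ :=
  (sin (ξ 0) + sin (ξ 1)) / ξ 2

/-- `v` is a velocity at the state `ξ` of two unit-speed agents and a fixed beacon, under arbitrary
steering: `v 0` and `v 1` are unconstrained, and the beacon bearings enter only through
`κᵢb - κᵢ`, whose rate does not depend on the steering. -/
structure IsPursuitVelocity (ξ v : Fin 7 → ℝ) : Prop where
  separation : v 2 = -(cos (ξ 0) + cos (ξ 1))
  relBearing₁ : v 3 - v 0 = sin (ξ 3) / ξ 5 - lineOfSightRate ξ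
  relBearing₂ : v 4 - v 1 = sin (ξ 4) / ξ 6 - lineOfSightRate ξ
  beaconDist₁ : v 5 = -cos (ξ 3)
  beaconDist₂ : v 6 = -cos (ξ 4)

theorem isPursuitVelocity_twoAgentF (μ lam α0 α1 α2 : ℝ) (ξ : Fin 7 → ℝ) :
    IsPursuitVelocity ξ (twoAgentF μ lam α0 α1 α2 ξ) where
  separation := rfl
  relBearing₁ := by simp only [twoAgentF, lineOfSightRate, Matrix.cons_val]; ring
  relBearing₂ := by simp only [twoAgentF, lineOfSightRate, Matrix.cons_val]; ring
  beaconDist₁ := rfl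
  beaconDist₂ := rfl

theorem fderiv_gOne_apply (ξ v : Fin 7 → ℝ) :
    fderiv ℝ gOne ξ v = v 2
      - (ξ 5 * (-sin (ξ 3 - ξ 0) * (v 3 - v 0)) + cos (ξ 3 - ξ 0) * v 5)
      - (ξ 6 * (-sin (ξ 4 - ξ 1) * (v 4 - v 1)) + cos (ξ 4 - ξ 1) * v 6) := by
  have coord (i : Fin 7) := hasFDerivAt_apply (𝕜 := ℝ) i ξ
  have leg (i j k : Fin 7) := (coord i).fun_mul ((coord j).fun_sub (coord k)).cos
  have hg : HasFDerivAt gOne _ ξ := ((coord 2).fun_sub (leg 5 3 0)).fun_sub (leg 6 4 1)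
  simp [hg.fderiv]

theorem fderiv_gTwo_apply (ξ v : Fin 7 → ℝ) :
    fderiv ℝ gTwo ξ v =
      (ξ 5 * (cos (ξ 3 - ξ 0) * (v 3 - v 0)) + sin (ξ 3 - ξ 0) * v 5)
      + (ξ 6 * (cos (ξ 4 - ξ 1) * (v 4 - v 1)) + sin (ξ 4 - ξ 1) * v 6) := by
  have coord (i : Fin 7) := hasFDerivAt_apply (𝕜 := ℝ) i ξ
  have leg (i j k : Fin 7) := (coord i).fun_mul ((coord j).fun_sub (coord k)).sin
  have hg : HasFDerivAt gTwo _ ξ := (leg 5 3 0).fun_add (leg 6 4 1)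
  simp [hg.fderiv]

section BeaconLeg

variable {κ β r ω δ : ℝ}

-- This and `beaconLeg_sin_rate` are the real and imaginary parts of `z' = -i ω z - exp (-i κ)`
-- for `z = r exp (i (β - κ))`, where `r' = -cos β` and `(β - κ)' = δ`.
theorem beaconLeg_cos_rate (hr : r ≠ 0) (hδ : δ = sin β / r - ω) :
    r * (-sin (β - κ) * δ) + cos (β - κ) * -cos β = ω * (r * sin (β - κ)) - cos κ := by
  have hcos : cos κ = cos β * cos (β - κ) + sin β * sin (β - κ) := by
    rw [← cos_sub, sub_sub_cancel]
  have hrδ : r * δ = sin β - r * ω := by rw [hδ, mul_sub, mul_div_cancel₀ _ hr]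
  linear_combination hcos - sin (β - κ) * hrδ

theorem beaconLeg_sin_rate (hr : r ≠ 0) (hδ : δ = sin β / r - ω) :
    r * (cos (β - κ) * δ) + sin (β - κ) * -cos β = sin κ - ω * (r * cos (β - κ)) := by
  have hsin : sin κ = sin β * cos (β - κ) - cos β * sin (β - κ) := by
    rw [← sin_sub, sub_sub_cancel]
  have hrδ : r * δ = sin β - r * ω := by rw [hδ, mul_sub, mul_div_cancel₀ _ hr]
  linear_combination cos (β - κ) * hrδ - hsin

end BeaconLeg

namespace IsPursuitVelocity

variable {ξ v : Fin 7 → ℝ}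

theorem fderiv_gOne (hv : IsPursuitVelocity ξ v) (h5 : ξ 5 ≠ 0) (h6 : ξ 6 ≠ 0) :
    fderiv ℝ gOne ξ v = -lineOfSightRate ξ * gTwo ξ := by
  rw [fderiv_gOne_apply, hv.separation, hv.beaconDist₁, hv.beaconDist₂,
    beaconLeg_cos_rate h5 hv.relBearing₁, beaconLeg_cos_rate h6 hv.relBearing₂, gTwo]
  ring

theorem fderiv_gTwo (hv : IsPursuitVelocity ξ v) (hρ : ξ 2 ≠ 0) (h5 : ξ 5 ≠ 0) (h6 : ξ 6 ≠ 0) :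
    fderiv ℝ gTwo ξ v = lineOfSightRate ξ * gOne ξ := by
  have hω : lineOfSightRate ξ * ξ 2 = sin (ξ 0) + sin (ξ 1) := div_mul_cancel₀ _ hρ
  rw [fderiv_gTwo_apply, hv.beaconDist₁, hv.beaconDist₂,
    beaconLeg_sin_rate h5 hv.relBearing₁, beaconLeg_sin_rate h6 hv.relBearing₂, gOne]
  linear_combination -hω

end IsPursuitVelocity

theorem stmt15_general {ξ v : Fin 7 → ℝ} (hv : IsPursuitVelocity ξ v)
    (hρ : ξ 2 ≠ 0) (h5 : ξ 5 ≠ 0) (h6 : ξ 6 ≠ 0) :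
    fderiv ℝ gOne ξ v = -lineOfSightRate ξ * gTwo ξ ∧
    fderiv ℝ gTwo ξ v = lineOfSightRate ξ * gOne ξ ∧
    (gOne ξ = 0 ∧ gTwo ξ = 0 → fderiv ℝ gOne ξ v = 0 ∧ fderiv ℝ gTwo ξ v = 0) := by
  have hOne := hv.fderiv_gOne h5 h6
  have hTwo := hv.fderiv_gTwo hρ h5 h6
  refine ⟨hOne, hTwo, fun ⟨hg₁, hg₂⟩ => ⟨?_, ?_⟩⟩
  · rw [hOne, hg₂, mul_zero]
  · rw [hTwo, hg₁, mul_zero]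

/-- The derivatives of the constraint functions along the two-agent closed-loop
vector field; in particular the constraint manifold is invariant. -/
theorem stmt15 (μ lam α0 α1 α2 : ℝ) (hμ : 0 < μ) (hlam : lam ∈ Set.Ioo (0:ℝ) 1)
    (ξ : Fin 7 → ℝ) (hρ : 0 < ξ 2) (h5 : 0 < ξ 5) (h6 : 0 < ξ 6) :
    fderiv ℝ gOne ξ (twoAgentF μ lam α0 α1 α2 ξ)
        = -((sin (ξ 0) + sin (ξ 1)) / ξ 2) * gTwo ξ ∧
    fderiv ℝ gTwo ξ (twoAgentF μ lam α0 α1 α2 ξ)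
        = ((sin (ξ 0) + sin (ξ 1)) / ξ 2) * gOne ξ ∧
    (gOne ξ = 0 ∧ gTwo ξ = 0 →
      fderiv ℝ gOne ξ (twoAgentF μ lam α0 α1 α2 ξ) = 0 ∧
      fderiv ℝ gTwo ξ (twoAgentF μ lam α0 α1 α2 ξ) = 0) :=
  stmt15_general (isPursuitVelocity_twoAgentF μ lam α0 α1 α2 ξ) hρ.ne' h5.ne' h6.ne'
end

section
/- Let λ ∈ (0,1), μ > 0, δ ∈ ℝ with δ ≠ 0, and Ψ, α⁺ ∈ ℝ. Every complex root of the cubic polynomial x³ + λΨ·x² + δ²·x + (1−λ)·μ·sin α⁺·δ² has strictly negative real part if and only if Ψ > 0, sin α⁺ > 0, and λΨ − (1−λ)·μ·sin α⁺ > 0. In particular, if additionally Ψ = μ(sin α_0 + ((1−λ)/λ)·sin α⁺) for some α_0 with sin α_0 > 0, the third condition is automatic, since then λΨ − (1−λ)μ·sin α⁺ = μλ·sin α_0 > 0. -/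
open Real

/-!
A real cubic factors over `ℝ` as `(x + r)(x² + px + q)`, and a product is Hurwitz exactly when both
factors are, so the cubic is Hurwitz iff `r`, `p` and `q` are positive. In these parameters
`a = r + p`, `b = q + rp`, `c = rq`, and the Routh–Hurwitz determinant factors as
`ab - c = p(q + ra)`, which turns positivity of `r, p, q` into positivity of `a, c, ab - c`.
-/

section RouthHurwitz

open Polynomial

/-- A Hurwitz (stable) polynomial: all its complex roots lie in the open left half-plane, the
criterion for asymptotic stability of a linear system with this characteristic polynomial. The
coefficients may lie in any semiring over which `ℂ` is an algebra, so that real polynomials can be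
factored over `ℂ`. The zero polynomial is not Hurwitz. -/
def IsHurwitz {R : Type*} [CommSemiring R] [Algebra R ℂ] (f : R[X]) : Prop :=
  ∀ z : ℂ, aeval z f = 0 → z.re < 0

theorem isHurwitz_mul {R : Type*} [CommSemiring R] [Algebra R ℂ] {f g : R[X]} :
    IsHurwitz (f * g) ↔ IsHurwitz f ∧ IsHurwitz g := by
  simp only [IsHurwitz, map_mul, mul_eq_zero, or_imp, forall_and]

theorem isHurwitz_map_algebraMap {R S : Type*} [CommSemiring R] [CommSemiring S] [Algebra R S]
    [Algebra R ℂ] [Algebra S ℂ] [IsScalarTower R S ℂ] {f : R[X]} :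
    IsHurwitz (f.map (algebraMap R S)) ↔ IsHurwitz f := by
  simp only [IsHurwitz, aeval_map_algebraMap]

theorem isHurwitz_X_add_C {R : Type*} [CommSemiring R] [Algebra R ℂ] {r : R} :
    IsHurwitz (X + C r) ↔ 0 < (algebraMap R ℂ r).re := by
  simp only [IsHurwitz, map_add, aeval_X, aeval_C, add_eq_zero_iff_eq_neg, forall_eq,
    Complex.neg_re, neg_lt_zero]

theorem exists_add_eq_and_mul_eq {K : Type*} [Field K] [IsAlgClosed K] [NeZero (2 : K)]
    (s p : K) : ∃ z w : K, z + w = s ∧ z * w = p := by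
  obtain ⟨z, hz⟩ := exists_quadratic_eq_zero (a := (1 : K)) (b := -s) (c := p) one_ne_zero
    (IsAlgClosed.exists_eq_mul_self _)
  obtain ⟨w, -, hsum, hprod⟩ := vieta_formula_quadratic (b := s) (c := p) (x := z)
    (by linear_combination hz)
  exact ⟨z, w, hsum, hprod⟩

theorem re_pos_and_re_pos_iff_of_add_eq_of_mul_eq {z w : ℂ} {s p : ℝ} (hs : z + w = s)
    (hp : z * w = p) : 0 < z.re ∧ 0 < w.re ↔ 0 < s ∧ 0 < p := by
  have hre : z.re + w.re = s := by simpa using congrArg Complex.re hs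
  have him : w.im = -z.im :=
    eq_neg_of_add_eq_zero_right (by simpa using congrArg Complex.im hs)
  have hprod : z.re * w.re + z.im ^ 2 = p := by
    simpa [him, ← sq] using congrArg Complex.re hp
  have hreal_or_conj : z.im = 0 ∨ z.re = w.re := by
    have : z.im * (z.re - w.re) = 0 := by
      have := congrArg Complex.im hp
      simp only [Complex.mul_im, him, Complex.ofReal_im] at this
      linear_combination -this
    simpa [sub_eq_zero] using this
  constructor
  · rintro ⟨hz, hw⟩
    exact ⟨hre ▸ add_pos hz hw, hprod ▸ by positivity⟩
  · rintro ⟨hs_pos, hp_pos⟩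
    rcases hreal_or_conj with hreal | hconj
    · have hmul : 0 < z.re * w.re := by simpa [hreal, ← hprod] using hp_pos
      rcases mul_pos_iff.mp hmul with hpos | ⟨hz, hw⟩
      · exact hpos
      · linarith
    · constructor <;> linarith

theorem isHurwitz_quadratic_iff {a b : ℝ} :
    IsHurwitz (X ^ 2 + C a * X + C b) ↔ 0 < a ∧ 0 < b := by
  obtain ⟨z, w, hsum, hprod⟩ := exists_add_eq_and_mul_eq (a : ℂ) b
  have hfactor :
      (X ^ 2 + C a * X + C b).map (algebraMap ℝ ℂ) = (X + C z) * (X + C w) := by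
    simp only [Polynomial.map_add, Polynomial.map_mul, Polynomial.map_pow, map_X, map_C,
      Complex.coe_algebraMap, ← hsum, ← hprod, C_add, C_mul]
    ring
  rw [← isHurwitz_map_algebraMap (S := ℂ), hfactor, isHurwitz_mul, isHurwitz_X_add_C,
    isHurwitz_X_add_C]
  exact re_pos_and_re_pos_iff_of_add_eq_of_mul_eq hsum hprod

theorem exists_eq_linear_mul_quadratic (a b c : ℝ) :
    ∃ r p q : ℝ, X ^ 3 + C a * X ^ 2 + C b * X + C c = (X + C r) * (X ^ 2 + C p * X + C q) := by
  have hmonic : IsMonicOfDegree (X ^ 3 + C a * X ^ 2 + C b * X + C c) (1 + 2) :=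
    (isMonicOfDegree_iff _ _).mpr ⟨by compute_degree, by compute_degree!⟩
  obtain ⟨f, g, hf, hg, hfg⟩ := hmonic.eq_isMonicOfDegree_two_mul_isMonicOfDegree
  obtain ⟨p, q, rfl⟩ := isMonicOfDegree_two_iff.mp hf
  obtain ⟨r, rfl⟩ := isMonicOfDegree_one_iff.mp hg
  exact ⟨r, p, q, hfg.trans (mul_comm _ _)⟩

theorem cubic_coeffs_eq_of_eq_linear_mul_quadratic {R : Type*} [CommSemiring R]
    {a b c r p q : R}
    (h : X ^ 3 + C a * X ^ 2 + C b * X + C c = (X + C r) * (X ^ 2 + C p * X + C q)) :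
    a = r + p ∧ b = q + r * p ∧ c = r * q := by
  have hexpand : (X + C r) * (X ^ 2 + C p * X + C q) =
      X ^ 3 + C (r + p) * X ^ 2 + C (q + r * p) * X + C (r * q) := by
    simp only [C_add, C_mul]
    ring
  rw [hexpand] at h
  refine ⟨?_, ?_, ?_⟩
  · simpa [coeff_X, coeff_C, -map_add, -map_mul] using congrArg (coeff · 2) h
  · simpa [coeff_X, coeff_C, -map_add, -map_mul] using congrArg (coeff · 1) h
  · simpa [coeff_X, coeff_C, -map_add, -map_mul] using congrArg (coeff · 0) h

theorem pos_and_pos_and_pos_iff_routhHurwitz {R : Type*} [CommRing R] [LinearOrder R]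
    [IsStrictOrderedRing R] {r p q : R} :
    0 < r ∧ 0 < p ∧ 0 < q ↔ 0 < r + p ∧ 0 < r * q ∧ r * q < (r + p) * (q + r * p) := by
  have hdet : (r + p) * (q + r * p) - r * q = p * (q + r * (r + p)) := by ring
  rw [← sub_pos (b := r * q), hdet]
  constructor
  · rintro ⟨hr, hp, hq⟩
    exact ⟨by positivity, by positivity, by positivity⟩
  · rintro ⟨hsum, hprod, hdet_pos⟩
    rcases mul_pos_iff.mp hprod with ⟨hr, hq⟩ | ⟨hr, hq⟩
    · exact ⟨hr, pos_of_mul_pos_left hdet_pos (by positivity), hq⟩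
    · have hp : 0 < p := by linarith
      have hneg : q + r * (r + p) < 0 := add_neg hq (mul_neg_of_neg_of_pos hr hsum)
      exact absurd hdet_pos (mul_neg_of_pos_of_neg hp hneg).not_gt

theorem isHurwitz_cubic_iff {a b c : ℝ} :
    IsHurwitz (X ^ 3 + C a * X ^ 2 + C b * X + C c) ↔ 0 < a ∧ 0 < c ∧ c < a * b := by
  obtain ⟨r, p, q, hfactor⟩ := exists_eq_linear_mul_quadratic a b c
  obtain ⟨rfl, rfl, rfl⟩ := cubic_coeffs_eq_of_eq_linear_mul_quadratic hfactor
  rw [hfactor, isHurwitz_mul, isHurwitz_X_add_C, isHurwitz_quadratic_iff]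
  exact pos_and_pos_and_pos_iff_routhHurwitz

theorem forall_cubic_root_re_neg_iff {a b c : ℝ} :
    (∀ z : ℂ, z ^ 3 + a * z ^ 2 + b * z + c = 0 → z.re < 0) ↔ 0 < a ∧ 0 < c ∧ c < a * b := by
  simpa [IsHurwitz] using isHurwitz_cubic_iff (a := a) (b := b) (c := c)

end RouthHurwitz

/-- Routh–Hurwitz for the cubic factor `x³ + λΨx² + δ²x + (1−λ)μ sin α⁺ δ²`:
all complex roots lie in the open left half-plane iff `Ψ > 0`, `sin α⁺ > 0` and
`λΨ − (1−λ)μ sin α⁺ > 0`; moreover, if `Ψ = μ(sin α0 + ((1−λ)/λ) sin α⁺)` then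
`λΨ − (1−λ)μ sin α⁺ = μλ sin α0`, so the third condition is automatic when
`sin α0 > 0`. -/
theorem stmt17 (lam μ δ Ψ αp : ℝ) (hlam : lam ∈ Set.Ioo (0:ℝ) 1) (hμ : 0 < μ)
    (hδ : δ ≠ 0) :
    ((∀ z : ℂ, z ^ 3 + ((lam * Ψ : ℝ) : ℂ) * z ^ 2 + ((δ ^ 2 : ℝ) : ℂ) * z
        + (((1 - lam) * μ * sin αp * δ ^ 2 : ℝ) : ℂ) = 0 → z.re < 0) ↔
      (0 < Ψ ∧ 0 < sin αp ∧ 0 < lam * Ψ - (1 - lam) * μ * sin αp)) ∧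
    (∀ α0 : ℝ, Ψ = μ * (sin α0 + ((1 - lam) / lam) * sin αp) →
      lam * Ψ - (1 - lam) * μ * sin αp = μ * lam * sin α0 ∧
      (0 < sin α0 → 0 < lam * Ψ - (1 - lam) * μ * sin αp)) := by
  obtain ⟨hlam_pos, hlam_lt⟩ := hlam
  have hδ_sq : 0 < δ ^ 2 := by positivity
  have hcoeff : 0 < (1 - lam) * μ := mul_pos (sub_pos.mpr hlam_lt) hμ
  refine ⟨?_, fun α0 hΨ ↦ ?_⟩
  · rw [forall_cubic_root_re_neg_iff, mul_lt_mul_iff_of_pos_right hδ_sq,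
      mul_pos_iff_of_pos_left hlam_pos, mul_pos_iff_of_pos_right hδ_sq,
      mul_pos_iff_of_pos_left hcoeff, sub_pos]
  · have hgap : lam * Ψ - (1 - lam) * μ * sin αp = μ * lam * sin α0 := by
      rw [hΨ]
      field_simp
      ring
    exact ⟨hgap, fun hα0 ↦ hgap ▸ by positivity⟩
end
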